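/- Let R be a commutative noetherian ring with identity of Krull dimension dim R ≤ 2, and let a be an ideal of R. Then the local cohomology module H^i_a(M) is a-cofinite for every i and every finitely generated R-module M. -/

import Mathlib

universe u

open CategoryTheory

/-- `Ext^i_R(R/a, M)` as an `R`-module, for `M : ModuleCat R`. -/
noncomputable def extQuot {R : Type u} [CommRing R] (a : Ideal R) (i : ℕ)
    (M : ModuleCat.{u} R) : ModuleCat.{u} R :=
  ((Ext R (ModuleCat.{u} R) i).obj (Opposite.op (ModuleCat.of R (R ⧸ a)))).obj M

/-- An `R`-module `M` is `a`-cofinite if `Supp M ⊆ V(a)` and `Ext^i_R(R/a, M)` is a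
finitely generated `R`-module for every `i ≥ 0`. -/
def IsCofinite {R : Type u} [CommRing R] (a : Ideal R) (M : ModuleCat.{u} R) : Prop :=
  Module.support R M ⊆ PrimeSpectrum.zeroLocus (a : Set R) ∧
    ∀ i : ℕ, Module.Finite R (extQuot a i M)

/-!
Every local cohomology module of a module with finitely generated `Ext^j(R/a, -)` again has this
property, as soon as all the others have it and almost all of them vanish; this follows by shifting
dimensions along an embedding of `M / Γ_a(M)` into an injective module without `a`-torsion. For a
finitely generated `M` of dimension `d ≤ 2` only `H^0_a(M)`, `H^1_a(M)` and `H^2_a(M)` can be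
nonzero, and `H^0_a(M)` is finitely generated. So it remains to treat `H^2_a(M)`, and in general
`H^i_a(M)` with `d ≤ i`, which is artinian with a finitely generated submodule of elements killed by
`a`. That property passes to quotients and implies the finiteness of `Ext^j(R/a, -)`. It is proved
by induction on `i`: modulo `Γ_a(M)` there is a regular element `x ∈ a`, the module `M / xM` has
smaller dimension, and its `H^(i-1)_a` surjects onto the `x`-torsion of `H^i_a(M)`; by Melkersson's
lemma an `a`-torsion module with artinian `x`-torsion is artinian.
-/

universe v w

section ArtinianCofinite

variable {R : Type*} [CommRing R] {A B C : Type*} [AddCommGroup A] [Module R A]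
  [AddCommGroup B] [Module R B] [AddCommGroup C] [Module R C] {S : Set R} {x : R}

/-- Artinian modules `M` in which the elements annihilated by `S` form a noetherian submodule. For
an ideal `S` of a noetherian ring they are Melkersson's artinian `S`-cofinite modules (up to the
condition on supports). -/
def IsArtinianCofinite (S : Set R) (M : Type*) [AddCommGroup M] [Module R M] : Prop :=
  IsArtinian R M ∧ IsNoetherian R (Submodule.torsionBySet R M S)

lemma torsionBySet_insert :
    Submodule.torsionBySet R A (insert x S) =
      Submodule.torsionBy R A x ⊓ Submodule.torsionBySet R A S := by
  ext m
  simp [Submodule.mem_torsionBySet_iff]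

lemma map_subtype_torsionBySet (N : Submodule R A) :
    (Submodule.torsionBySet R N S).map N.subtype = N ⊓ Submodule.torsionBySet R A S := by
  ext m
  simp [Submodule.mem_torsionBySet_iff, Subtype.ext_iff, and_comm]

lemma isNoetherian_torsionBySet_torsionBy_iff :
    IsNoetherian R (Submodule.torsionBySet R (Submodule.torsionBy R A x) S) ↔
      IsNoetherian R (Submodule.torsionBySet R A (insert x S)) := by
  rw [torsionBySet_insert, ← map_subtype_torsionBySet]
  exact (Submodule.equivMapOfInjective _ Subtype.val_injective _).isNoetherian_iff

lemma isNoetherian_torsionBySet_insert_pow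
    (h : IsNoetherian R (Submodule.torsionBySet R A (insert x S))) (k : ℕ) :
    IsNoetherian R (Submodule.torsionBySet R A (insert (x ^ k) S)) := by
  induction k with
  | zero =>
    rw [torsionBySet_insert, pow_zero, Submodule.torsionBy_one, bot_inf_eq]
    infer_instance
  | succ k ih =>
    have hle : Submodule.torsionBySet R A (insert x S) ≤
        Submodule.torsionBySet R A (insert (x ^ (k + 1)) S) := by
      simp only [torsionBySet_insert]
      exact inf_le_inf_right _
        (Submodule.torsionBy_le_torsionBy_of_dvd _ _ (dvd_pow_self x k.succ_ne_zero))
    have hsmul : ∀ m ∈ Submodule.torsionBySet R A (insert (x ^ (k + 1)) S),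
        LinearMap.lsmul R A x m ∈ Submodule.torsionBySet R A (insert (x ^ k) S) := by
      simp only [LinearMap.lsmul_apply, torsionBySet_insert, Submodule.mem_inf,
        Submodule.mem_torsionBy_iff, smul_smul]
      exact fun m hm ↦ ⟨by rw [← pow_succ, hm.1], Submodule.smul_mem _ _ hm.2⟩
    refine isNoetherian_of_range_eq_ker (Submodule.inclusion hle)
      ((LinearMap.lsmul R A x).restrict hsmul) ?_
    rw [Submodule.range_inclusion, LinearMap.ker_restrict]
    ext ⟨m, hm⟩
    rw [torsionBySet_insert, Submodule.mem_inf] at hm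
    simp [torsionBySet_insert, hm.2]

lemma map_mem_torsionBySet (f : A →ₗ[R] B) :
    ∀ m ∈ Submodule.torsionBySet R A S, f m ∈ Submodule.torsionBySet R B S := by
  simp only [Submodule.mem_torsionBySet_iff, ← map_smul]
  exact fun m hm s ↦ by rw [hm s, map_zero]

lemma map_mem_torsionBy (f : A →ₗ[R] B) :
    ∀ m ∈ Submodule.torsionBy R A x, f m ∈ Submodule.torsionBy R B x := by
  simp only [Submodule.mem_torsionBy_iff, ← map_smul]
  exact fun m hm ↦ by rw [hm, map_zero]

lemma exact_torsionBy_lsmul (x : R) :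
    Function.Exact (Submodule.torsionBy R A x).subtype (LinearMap.lsmul R A x) :=
  LinearMap.exact_subtype_ker_map _

namespace IsArtinianCofinite

lemma of_injective (hB : IsArtinianCofinite S B) {f : A →ₗ[R] B} (hf : Function.Injective f) :
    IsArtinianCofinite S A := by
  obtain ⟨_, _⟩ := hB
  exact ⟨isArtinian_of_injective f hf, isNoetherian_of_injective
    (f.restrict (map_mem_torsionBySet f)) fun _ _ h ↦ Subtype.ext (hf (congrArg Subtype.val h))⟩

lemma of_exact_of_injective (hA : IsArtinianCofinite S A) (hC : IsArtinianCofinite S C)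
    {f : A →ₗ[R] B} {g : B →ₗ[R] C} (hf : Function.Injective f) (hfg : Function.Exact f g) :
    IsArtinianCofinite S B := by
  obtain ⟨_, _⟩ := hA
  obtain ⟨_, _⟩ := hC
  refine ⟨isArtinian_of_range_eq_ker f g hfg.linearMap_ker_eq.symm,
    isNoetherian_of_range_eq_ker (f.restrict (map_mem_torsionBySet f))
      (g.restrict (map_mem_torsionBySet g)) (Eq.symm (Function.Exact.linearMap_ker_eq ?_))⟩
  rintro ⟨b, hb⟩
  simp only [LinearMap.restrict_apply, Submodule.mk_eq_zero, hfg b, Set.mem_range, Subtype.exists,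
    Subtype.mk.injEq, exists_prop]
  refine ⟨?_, fun ⟨a, _, hab⟩ ↦ ⟨a, hab⟩⟩
  rintro ⟨a, rfl⟩
  simp only [Submodule.mem_torsionBySet_iff, ← map_smul] at hb
  exact ⟨a, (Submodule.mem_torsionBySet_iff _ _).2 fun s ↦ hf ((hb s).trans f.map_zero.symm), rfl⟩

lemma torsionBy_pow (h : IsArtinianCofinite (insert x S) A) (k : ℕ) :
    IsArtinianCofinite S (Submodule.torsionBy R A (x ^ k)) :=
  have := h.1
  ⟨inferInstance, isNoetherian_torsionBySet_torsionBy_iff.2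
    (isNoetherian_torsionBySet_insert_pow h.2 k)⟩

lemma of_torsionBy_pow [IsArtinian R A] {k : ℕ} (hk : k ≠ 0)
    (h : IsArtinianCofinite S (Submodule.torsionBy R A (x ^ k))) :
    IsArtinianCofinite (insert x S) A := by
  have := isNoetherian_torsionBySet_torsionBy_iff.1 h.2
  refine ⟨inferInstance, isNoetherian_of_le
    (?_ : _ ≤ Submodule.torsionBySet R A (insert (x ^ k) S))⟩
  simp only [torsionBySet_insert]
  exact inf_le_inf_right _ (Submodule.torsionBy_le_torsionBy_of_dvd _ _ (dvd_pow_self x hk))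

end IsArtinianCofinite

lemma exists_surjective_mkQ_comp_torsionBy_pow [IsArtinian R A] (x : R) :
    ∃ k ≠ 0, Function.Surjective
      ((LinearMap.range (LinearMap.lsmul R A (x ^ k))).mkQ ∘ₗ
        (Submodule.torsionBy R A (x ^ k)).subtype) := by
  obtain ⟨k, hk, hk0⟩ := ((LinearMap.lsmul R A x).eventually_codisjoint_ker_pow_range_pow.and
    (Filter.eventually_ne_atTop 0)).exists
  refine ⟨k, hk0, ?_⟩
  rw [← show LinearMap.lsmul R A (x ^ k) = LinearMap.lsmul R A x ^ k from
    map_pow (Algebra.lsmul R R A) x k, codisjoint_iff] at hk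
  rw [← LinearMap.range_eq_top, LinearMap.range_comp, Submodule.range_subtype,
    Submodule.map_mkQ_eq_top, sup_comm]
  exact hk

namespace IsArtinianCofinite

-- The snake lemma for multiplication by `y` on `0 → ker g → A → C → 0`.
lemma torsionBy_of_surjective {g : A →ₗ[R] C} (hg : Function.Surjective g) (y : R)
    (hA : IsArtinianCofinite S
      (LinearMap.range (g.restrict (map_mem_torsionBy g (x := y)))))
    (hK : IsArtinianCofinite S
      (LinearMap.ker g ⧸ LinearMap.range (LinearMap.lsmul R (LinearMap.ker g) y))) :
    IsArtinianCofinite S (Submodule.torsionBy R C y) := by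
  have hgK : Function.Exact (LinearMap.ker g).subtype g := LinearMap.exact_subtype_ker_map g
  have hδ := SnakeLemma.exact_δ'_right (LinearMap.lsmul R (LinearMap.ker g) y)
    (LinearMap.lsmul R A y) (LinearMap.lsmul R C y) _ g hgK _ g hgK
    rfl (LinearMap.ext fun a ↦ map_smul g y a) _ (exact_torsionBy_lsmul y)
    _ (exact_torsionBy_lsmul y) _
    (LinearMap.exact_map_mkQ_range _) hg Subtype.val_injective
    (g.restrict (map_mem_torsionBy g)) rfl Subtype.val_injective
  exact hA.of_exact_of_injective hK (Submodule.subtype_injective _)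
    (LinearMap.exact_iff.2 ((LinearMap.exact_iff.1 hδ).trans (Submodule.range_subtype _).symm))

lemma of_surjective_of_finite (hS : S.Finite) {A C : Type v} [AddCommGroup A] [Module R A]
    [AddCommGroup C] [Module R C] (hA : IsArtinianCofinite S A) {g : A →ₗ[R] C}
    (hg : Function.Surjective g) : IsArtinianCofinite S C := by
  induction S, hS using Set.Finite.induction_on generalizing A C with
  | empty =>
    obtain ⟨_, hA⟩ := hA
    have torsion_empty : Submodule.torsionBySet R A ∅ = ⊤ := by
      ext m
      simp [Submodule.mem_torsionBySet_iff]
    rw [torsion_empty, isNoetherian_top_iff] at hA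
    have := isNoetherian_of_surjective g (LinearMap.range_eq_top.mpr hg)
    exact ⟨isArtinian_of_surjective _ g hg, inferInstance⟩
  | @insert x S _ _ ih =>
    have := hA.1
    have : IsArtinian R C := isArtinian_of_surjective _ g hg
    have hK : IsArtinianCofinite (insert x S) (LinearMap.ker g) :=
      hA.of_injective (LinearMap.ker g).subtype_injective
    obtain ⟨k, hk, hsurj⟩ := exists_surjective_mkQ_comp_torsionBy_pow (A := LinearMap.ker g) x
    exact .of_torsionBy_pow hk (torsionBy_of_surjective hg (x ^ k)
      (ih (hA.torsionBy_pow k) (LinearMap.surjective_rangeRestrict _))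
      (ih (hK.torsionBy_pow k) hsurj))

lemma of_surjective [IsNoetherianRing R] {A C : Type v} [AddCommGroup A] [Module R A]
    [AddCommGroup C] [Module R C] (hA : IsArtinianCofinite S A) {g : A →ₗ[R] C}
    (hg : Function.Surjective g) : IsArtinianCofinite S C := by
  obtain ⟨T, -, hT⟩ :=
    (Submodule.fg_span_iff_fg_span_finset_subset S).1 (IsNoetherian.noetherian (Ideal.span S))
  have iff_finset (M : Type v) [AddCommGroup M] [Module R M] :
      IsArtinianCofinite S M ↔ IsArtinianCofinite (T : Set R) M := by
    rw [IsArtinianCofinite, IsArtinianCofinite, Submodule.torsionBySet_eq_torsionBySet_span S,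
      Submodule.torsionBySet_eq_torsionBySet_span (T : Set R), Ideal.span, hT]
  exact (iff_finset C).2 (of_surjective_of_finite T.finite_toSet ((iff_finset A).1 hA) hg)

end IsArtinianCofinite

end ArtinianCofinite

section Melkersson

lemma wellFoundedGT_natOrderHom (α : Type*) [PartialOrder α] [WellFoundedGT α] :
    WellFoundedGT (ℕ →o α) := by
  refine wellFoundedGT_iff_monotone_chain_condition.2 fun F ↦ ?_
  have hF {i i' n n' : ℕ} (hi : i ≤ i') (hn : n ≤ n') : F i n ≤ F i' n' :=
    ((F i).mono hn).trans (F.mono hi n')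
  obtain ⟨k, hk⟩ := wellFoundedGT_iff_monotone_chain_condition.1 ‹_›
    (⟨fun i ↦ F i i, fun _ _ h ↦ hF h h⟩ : ℕ →o α)
  choose J hJ using fun n ↦ wellFoundedGT_iff_monotone_chain_condition.1 ‹_›
    (⟨fun i ↦ F i n, fun _ _ h ↦ hF h le_rfl⟩ : ℕ →o α)
  refine ⟨max k ((Finset.range k).sup J), fun i hi ↦ OrderHom.ext _ _ (funext fun n ↦ ?_)⟩
  obtain ⟨hki, hJi⟩ := max_le_iff.1 hi
  rcases lt_or_ge n k with hn | hn
  · have hJn : J n ≤ (Finset.range k).sup J := Finset.le_sup (Finset.mem_range.2 hn)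
    exact (hJ n _ (hJn.trans (le_max_right _ _))).symm.trans (hJ n i (hJn.trans hJi))
  · refine le_antisymm (hF hi le_rfl) ?_
    calc F i n ≤ F (max i n) (max i n) := hF (le_max_left _ _) (le_max_right _ _)
      _ = F k k := (hk _ (hki.trans (le_max_left _ _))).symm
      _ ≤ F _ n := hF (le_max_left _ _) hn

variable {R : Type*} [CommRing R] {A : Type*} [AddCommGroup A] [Module R A]

/-- The decreasing sequence `n ↦ xⁿ N ∩ (0 :_A x)` of submodules of `A`, for a submodule `N`; these
intersections detect inclusions between submodules of an `x`-power torsion module. -/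
def powSMulInfTorsion (x : R) (N : Submodule R A) :
    ℕ →o (Submodule R (Submodule.torsionBy R A x))ᵒᵈ where
  toFun n := .toDual ((N.map (LinearMap.lsmul R A (x ^ n))).comap (Submodule.subtype _))
  monotone' := by
    rintro n n' hn ⟨_, _⟩ ⟨y, hy, rfl⟩
    refine ⟨x ^ (n' - n) • y, N.smul_mem _ hy, ?_⟩
    simp [smul_smul, ← pow_add, Nat.sub_add_cancel hn]

lemma le_of_powSMulInfTorsion_eq {x : R} (hx : ∀ m : A, ∃ n : ℕ, x ^ n • m = 0)
    {N P : Submodule R A} (hNP : N ≤ P)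
    (h : powSMulInfTorsion x N = powSMulInfTorsion x P) : P ≤ N := by
  have mem_of_pow_smul : ∀ n : ℕ, ∀ m ∈ P, x ^ n • m = 0 → m ∈ N := by
    intro n
    induction n with
    | zero => exact fun m _ hm ↦ by simp [show m = 0 by simpa using hm]
    | succ n ih =>
      intro m hm hxm
      have hmem : (⟨x ^ n • m, by simpa [smul_smul, ← pow_succ'] using hxm⟩ :
          Submodule.torsionBy R A x) ∈ (powSMulInfTorsion x P n).ofDual := ⟨m, hm, rfl⟩
      rw [← h] at hmem
      obtain ⟨y, hy, hym : x ^ n • y = x ^ n • m⟩ := hmem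
      have hmy : m - y ∈ N := ih _ (P.sub_mem hm (hNP hy)) (by rw [smul_sub, hym, sub_self])
      simpa using N.add_mem hmy hy
  exact fun m hm ↦ (hx m).elim fun n hn ↦ mem_of_pow_smul n m hm hn

/-- **Melkersson's lemma**. -/
theorem isArtinian_of_isArtinian_torsionBy {x : R} (hx : ∀ m : A, ∃ n : ℕ, x ^ n • m = 0)
    [IsArtinian R (Submodule.torsionBy R A x)] : IsArtinian R A := by
  have := wellFoundedGT_natOrderHom (Submodule R (Submodule.torsionBy R A x))ᵒᵈ
  have strictAnti : StrictAnti (powSMulInfTorsion (A := A) x) := fun N P hNP ↦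
    lt_of_le_of_ne (fun n ↦ Submodule.comap_mono (Submodule.map_mono hNP.le))
      fun h ↦ hNP.not_ge (le_of_powSMulInfTorsion_eq hx hNP.le h.symm)
  exact strictAnti.wellFoundedLT

end Melkersson

section ExtExactSequences

open Abelian

variable {R : Type*} [CommRing R] {C : Type*} [Category* C] [Abelian C] [Linear R C]
  [HasExt.{w} C] {S : ShortComplex C}

lemma function_exact_postcomp₂ (X : C) (hS : S.ShortExact) (n : ℕ) :
    Function.Exact ((Ext.mk₀ S.f).postcompOfLinear R X (add_zero n))
      ((Ext.mk₀ S.g).postcompOfLinear R X (add_zero n)) :=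
  (ShortComplex.ab_exact_iff_function_exact _).1 (Ext.covariant_sequence_exact₂' X hS n)

lemma function_exact_postcomp₃ (X : C) (hS : S.ShortExact) (n : ℕ) :
    Function.Exact ((Ext.mk₀ S.g).postcompOfLinear R X (add_zero n))
      (hS.extClass.postcompOfLinear R X (rfl : n + 1 = n + 1)) :=
  (ShortComplex.ab_exact_iff_function_exact _).1 (Ext.covariant_sequence_exact₃' X hS n _ rfl)

lemma function_exact_postcomp₁ (X : C) (hS : S.ShortExact) (n : ℕ) :
    Function.Exact (hS.extClass.postcompOfLinear R X (rfl : n + 1 = n + 1))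
      ((Ext.mk₀ S.f).postcompOfLinear R X (add_zero (n + 1))) :=
  (ShortComplex.ab_exact_iff_function_exact _).1 (Ext.covariant_sequence_exact₁' X hS n _ rfl)

end ExtExactSequences

section DirectLimit

variable {R ι : Type*} [CommRing R] [Preorder ι] [IsDirectedOrder ι] [Nonempty ι] [DecidableEq ι]
  {G G' G'' : ι → Type*} [∀ i, AddCommGroup (G i)] [∀ i, Module R (G i)]
  [∀ i, AddCommGroup (G' i)] [∀ i, Module R (G' i)]
  [∀ i, AddCommGroup (G'' i)] [∀ i, Module R (G'' i)]
  {f : ∀ i j, i ≤ j → G i →ₗ[R] G j} {f' : ∀ i j, i ≤ j → G' i →ₗ[R] G' j}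
  {f'' : ∀ i j, i ≤ j → G'' i →ₗ[R] G'' j}
  {φ : ∀ i, G i →ₗ[R] G' i} {hφ : ∀ i j h, φ j ∘ₗ f i j h = f' i j h ∘ₗ φ i}
  {ψ : ∀ i, G' i →ₗ[R] G'' i} {hψ : ∀ i j h, ψ j ∘ₗ f' i j h = f'' i j h ∘ₗ ψ i}

lemma directLimit_map_exact [DirectedSystem G'' (f'' · · ·)]
    (h : ∀ i, Function.Exact (φ i) (ψ i)) :
    Function.Exact (Module.DirectLimit.map φ hφ) (Module.DirectLimit.map ψ hψ) := by
  refine fun z ↦ ⟨fun hz ↦ ?_, ?_⟩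
  · obtain ⟨i, y, rfl⟩ := Module.DirectLimit.exists_of z
    rw [Module.DirectLimit.map_apply_of] at hz
    obtain ⟨j, hij, hj⟩ := Module.DirectLimit.of.zero_exact hz
    obtain ⟨x, hx⟩ := (h j (f' i j hij y)).1 ((LinearMap.congr_fun (hψ i j hij) y).trans hj)
    exact ⟨Module.DirectLimit.of R ι G f j x, by
      rw [Module.DirectLimit.map_apply_of, hx, Module.DirectLimit.of_f]⟩
  · rintro ⟨x, rfl⟩
    obtain ⟨i, x, rfl⟩ := Module.DirectLimit.exists_of x
    rw [Module.DirectLimit.map_apply_of, Module.DirectLimit.map_apply_of,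
      (h i).apply_apply_eq_zero, map_zero]

end DirectLimit

section ExtColimit

open Abelian Opposite

variable (R : Type*) [CommRing R] {ι : Type*} [Preorder ι] [DecidableEq ι] {C : Type*}
  [Category* C] [Abelian C] [Linear R C] [HasExt.{w} C] (X : ιᵒᵖ ⥤ C)

/-- The transition map `Ext^i(X_s, M) → Ext^i(X_t, M)`, for `s ≤ t`, of the direct system obtained
by applying `Ext^i(-, M)` to an inverse system `X`. -/
noncomputable abbrev extTransition (i : ℕ) (M : C) (s t : ι) (h : s ≤ t) :
    Ext (X.obj (op s)) M i →ₗ[R] Ext (X.obj (op t)) M i :=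
  (Ext.mk₀ (X.map (homOfLE h).op)).precompOfLinear R M (zero_add i)

instance (i : ℕ) (M : C) :
    DirectedSystem (fun t ↦ Ext (X.obj (op t)) M i) (extTransition R X i M · · ·) where
  map_self t e := by
    change (Ext.mk₀ (X.map (𝟙 (op t)))).comp e (zero_add i) = e
    rw [X.map_id, Ext.mk₀_id_comp]
  map_map s t v hst htv e := by
    change (Ext.mk₀ (X.map _)).comp ((Ext.mk₀ (X.map _)).comp e (zero_add i)) (zero_add i) =
      (Ext.mk₀ (X.map _)).comp e (zero_add i)
    rw [← Ext.comp_assoc _ _ _ (zero_add 0) _ (by lia), Ext.mk₀_comp_mk₀, ← X.map_comp]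
    rfl

/-- The direct limit of `Ext^i(X_t, M)` over an inverse system `X`. -/
abbrev ExtColimit (i : ℕ) (M : C) : Type _ :=
  Module.DirectLimit (fun t ↦ Ext (X.obj (op t)) M i) (extTransition R X i M)

namespace ExtColimit

variable {M N : C}

/-- The map induced on `ExtColimit` by composition with an Ext class `β : Ext^n(M, N)`:
functoriality for `n = 0` and connecting homomorphisms for `n = 1`. -/
noncomputable def postcomp {n : ℕ} (β : Ext M N n) {i j : ℕ} (h : i + n = j) :
    ExtColimit R X i M →ₗ[R] ExtColimit R X j N :=
  Module.DirectLimit.map (fun t ↦ β.postcompOfLinear R (X.obj (op t)) h) fun s t hst ↦ by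
    ext e
    exact Ext.comp_assoc _ e β (zero_add i) h (by lia)

variable {R X}

lemma postcomp_of {n : ℕ} (β : Ext M N n) {i j : ℕ} (h : i + n = j) (t : ι)
    (e : Ext (X.obj (op t)) M i) :
    postcomp R X β h (Module.DirectLimit.of R ι _ _ t e) =
      Module.DirectLimit.of R ι _ _ t (e.comp β h) :=
  Module.DirectLimit.map_apply_of _ _ _

variable [IsDirectedOrder ι] [Nonempty ι] {S : ShortComplex C}

lemma exact₂ (hS : S.ShortExact) (i : ℕ) :
    Function.Exact (postcomp R X (Ext.mk₀ S.f) (add_zero i))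
      (postcomp R X (Ext.mk₀ S.g) (add_zero i)) :=
  directLimit_map_exact fun _ ↦ function_exact_postcomp₂ _ hS i

lemma exact₃ (hS : S.ShortExact) (i : ℕ) :
    Function.Exact (postcomp R X (Ext.mk₀ S.g) (add_zero i))
      (postcomp R X hS.extClass (rfl : i + 1 = i + 1)) :=
  directLimit_map_exact fun _ ↦ function_exact_postcomp₃ _ hS i

lemma exact₁ (hS : S.ShortExact) (i : ℕ) :
    Function.Exact (postcomp R X hS.extClass (rfl : i + 1 = i + 1))
      (postcomp R X (Ext.mk₀ S.f) (add_zero (i + 1))) :=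
  directLimit_map_exact fun _ ↦ function_exact_postcomp₁ _ hS i

lemma postcomp_smul_id (r : R) {i : ℕ} (x : ExtColimit R X i M) :
    postcomp R X (Ext.mk₀ (r • 𝟙 M)) (add_zero i) x = r • x := by
  obtain ⟨t, e, rfl⟩ := Module.DirectLimit.exists_of x
  rw [postcomp_of, Ext.mk₀_smul, Ext.comp_smul, Ext.comp_mk₀_id, map_smul]

lemma subsingleton_of_injective [Injective M] (i : ℕ) :
    Subsingleton (ExtColimit R X (i + 1) M) := by
  refine subsingleton_of_forall_eq 0 fun x ↦ ?_
  obtain ⟨t, e, rfl⟩ := Module.DirectLimit.exists_of x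
  rw [Ext.eq_zero_of_injective e, map_zero]

end ExtColimit

end ExtColimit

section LocalCohomology

open Abelian Opposite

variable {R : Type u} [CommRing R]

/-- The submodule of the elements of `M` annihilated by some power of `a`, usually denoted
`Γ_a(M)`. -/
def powTorsion (a : Ideal R) (M : Type*) [AddCommGroup M] [Module R M] : Submodule R M :=
  ⨆ n : ℕ, Submodule.torsionBySet R M (a ^ n : Ideal R)

lemma monotone_torsionBySet_pow (a : Ideal R) (M : Type*) [AddCommGroup M] [Module R M] :
    Monotone fun n : ℕ ↦ Submodule.torsionBySet R M (a ^ n : Ideal R) :=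
  fun _ _ h ↦ Submodule.torsionBySet_le_torsionBySet_of_subset (Ideal.pow_le_pow_right h)

lemma mem_powTorsion {a : Ideal R} {M : Type*} [AddCommGroup M] [Module R M] {m : M} :
    m ∈ powTorsion a M ↔ ∃ n : ℕ, ∀ r ∈ a ^ n, r • m = 0 := by
  simp [powTorsion, Submodule.mem_iSup_of_directed _ (monotone_torsionBySet_pow a M).directed_le,
    Submodule.mem_torsionBySet_iff]

lemma ext_smul_eq_zero {I : Ideal R} {r : R} (hr : r ∈ I) {M : ModuleCat.{u} R} {i : ℕ}
    (e : Ext (ModuleCat.of R (R ⧸ I)) M i) : r • e = 0 := by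
  have h : r • 𝟙 (ModuleCat.of R (R ⧸ I)) = 0 := by
    ext
    exact (Algebra.smul_def r (1 : R ⧸ I)).trans
      ((mul_one _).trans (Ideal.Quotient.eq_zero_iff_mem.2 hr))
  rw [← Ext.mk₀_id_comp e, ← Ext.smul_comp, ← Ext.mk₀_smul, h, Ext.mk₀_zero, Ext.zero_comp]

/-- Evaluation at `1`, the map `Hom(R/I, M) → M`. -/
noncomputable def extEvalOne (I : Ideal R) (M : ModuleCat.{u} R) :
    Ext (ModuleCat.of R (R ⧸ I)) M 0 →ₗ[R] M :=
  LinearMap.applyₗ (1 : R ⧸ I) ∘ₗ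
    (Ext.linearEquiv₀ (R := R) ≪≫ₗ ModuleCat.homLinearEquiv (S := R)).toLinearMap

lemma extEvalOne_mk₀ {I : Ideal R} {M : ModuleCat.{u} R} (f : ModuleCat.of R (R ⧸ I) ⟶ M) :
    extEvalOne I M (Ext.mk₀ f) = f.hom (1 : R ⧸ I) := by
  have h : Ext.linearEquiv₀ (R := R) (Ext.mk₀ f) = f :=
    (Ext.mk₀_bijective _ _).1 (Ext.mk₀_linearEquiv₀_apply _)
  rw [extEvalOne, LinearMap.comp_apply, LinearEquiv.coe_coe, LinearEquiv.trans_apply, h]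
  rfl

lemma extEvalOne_mk₀_comp {I J : Ideal R} {M : ModuleCat.{u} R}
    {f : ModuleCat.of R (R ⧸ I) ⟶ ModuleCat.of R (R ⧸ J)} (hf : f.hom (1 : R ⧸ I) = (1 : R ⧸ J))
    (e : Ext (ModuleCat.of R (R ⧸ J)) M 0) :
    extEvalOne I M ((Ext.mk₀ f).comp e (zero_add 0)) = extEvalOne J M e := by
  obtain ⟨g, rfl⟩ := (Ext.mk₀_bijective _ _).2 e
  rw [Ext.mk₀_comp_mk₀, extEvalOne_mk₀, extEvalOne_mk₀, ModuleCat.comp_apply, hf]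

lemma extEvalOne_comp_mk₀ {I : Ideal R} {M N : ModuleCat.{u} R}
    (e : Ext (ModuleCat.of R (R ⧸ I)) M 0) (g : M ⟶ N) :
    extEvalOne I N (e.comp (Ext.mk₀ g) (add_zero 0)) = g.hom (extEvalOne I M e) := by
  obtain ⟨f, rfl⟩ := (Ext.mk₀_bijective _ _).2 e
  rw [Ext.mk₀_comp_mk₀, extEvalOne_mk₀, extEvalOne_mk₀, ModuleCat.comp_apply]

lemma extEvalOne_injective (I : Ideal R) (M : ModuleCat.{u} R) :
    Function.Injective (extEvalOne I M) := by
  refine Function.Injective.comp (g := LinearMap.applyₗ (1 : R ⧸ I)) (fun f g hfg ↦ ?_)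
    (LinearEquiv.injective _)
  exact Submodule.linearMap_qext _ (LinearMap.ext_ring hfg)

/-- The inverse system of the quotients `R/a^t`, the one used in Mathlib's `localCohomology`. -/
noncomputable abbrev quotientPowers (a : Ideal R) : ℕᵒᵖ ⥤ ModuleCat.{u} R :=
  localCohomology.ringModIdeals (localCohomology.idealPowersDiagram a)

/-- Local cohomology computed in `CategoryTheory.Abelian.Ext` and with an explicit direct limit. -/
abbrev LocalCoh (a : Ideal R) (i : ℕ) (M : ModuleCat.{u} R) : Type u :=
  ExtColimit R (quotientPowers a) i M

namespace LocalCoh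

variable {a : Ideal R} {M : ModuleCat.{u} R}

lemma exists_pow_smul_eq_zero {i : ℕ} (x : LocalCoh a i M) :
    ∃ n : ℕ, ∀ r ∈ a ^ n, r • x = 0 := by
  obtain ⟨n, e, rfl⟩ := Module.DirectLimit.exists_of x
  refine ⟨n, fun r hr ↦ ?_⟩
  have he : r • e = 0 := ext_smul_eq_zero (I := a ^ n) hr e
  rw [← map_smul, he, map_zero]

variable (a M) in
/-- The map `H^0_a(M) → M` induced by the evaluations `Hom(R/a^t, M) → M` at `1`. -/
noncomputable def eval : LocalCoh a 0 M →ₗ[R] M :=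
  Module.DirectLimit.lift R ℕ _ _ (fun t ↦ extEvalOne (a ^ t) M) fun _ _ _ e ↦
    extEvalOne_mk₀_comp rfl e

lemma eval_of (t : ℕ) (e : Ext (ModuleCat.of R (R ⧸ a ^ t)) M 0) :
    eval a M (Module.DirectLimit.of R ℕ _ _ t e) = extEvalOne (a ^ t) M e :=
  Module.DirectLimit.lift_of _ _ _

lemma eval_injective : Function.Injective (eval a M) :=
  Module.DirectLimit.lift_injective _ _ fun t ↦ extEvalOne_injective (a ^ t) M

lemma range_eval : LinearMap.range (eval a M) = powTorsion a M := by
  apply le_antisymm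
  · rintro _ ⟨x, rfl⟩
    obtain ⟨n, hn⟩ := exists_pow_smul_eq_zero x
    exact mem_powTorsion.2 ⟨n, fun r hr ↦ by rw [← map_smul, hn r hr, map_zero]⟩
  · intro m hm
    obtain ⟨n, hn⟩ := mem_powTorsion.1 hm
    let f : ModuleCat.of R (R ⧸ a ^ n) ⟶ M :=
      ModuleCat.ofHom (Submodule.liftQ (a ^ n) (LinearMap.toSpanSingleton R M m) hn)
    refine ⟨Module.DirectLimit.of R ℕ _ _ n (Ext.mk₀ f), ?_⟩
    exact (eval_of n _).trans ((extEvalOne_mk₀ f).trans (one_smul R m))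

lemma eval_postcomp_mk₀ {N : ModuleCat.{u} R} (f : M ⟶ N) (x : LocalCoh a 0 M) :
    eval a N (ExtColimit.postcomp R _ (Ext.mk₀ f) (add_zero 0) x) = f.hom (eval a M x) := by
  obtain ⟨t, e, rfl⟩ := Module.DirectLimit.exists_of x
  rw [ExtColimit.postcomp_of]
  exact (eval_of t _).trans ((extEvalOne_comp_mk₀ e f).trans (congrArg f.hom (eval_of t e).symm))

variable (a M) in
/-- The isomorphism `H^0_a(M) ≃ Γ_a(M)`. -/
noncomputable def equivPowTorsion : LocalCoh a 0 M ≃ₗ[R] powTorsion a M :=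
  LinearEquiv.ofInjective _ eval_injective ≪≫ₗ LinearEquiv.ofEq _ _ range_eval

end LocalCoh

end LocalCohomology

section ExtComparison

open Opposite ProjectiveResolution

variable {R : Type*} [CommRing R]

lemma homologyπ_eq_zero_iff {ι : Type*} {c : ComplexShape ι}
    {K : HomologicalComplex (ModuleCat.{v} R) c} {n : ι} (z : K.cycles n) :
    (K.homologyπ n).hom z = 0 ↔
      ∃ b, (K.d (c.prev n) n).hom b = (K.iCycles n).hom z := by
  have hexact := (ShortComplex.moduleCat_exact_iff _).1 <| ShortComplex.exact_of_g_is_cokernel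
    (.mk _ _ (K.toCycles_comp_homologyπ (c.prev n) n)) (K.homologyIsCokernel _ n rfl)
  have hi : Function.Injective (K.iCycles n).hom := (ModuleCat.mono_iff_injective _).1 inferInstance
  constructor
  · intro hz
    obtain ⟨b, hb⟩ := hexact z hz
    exact ⟨b, by rw [← hb, ← K.toCycles_i]; rfl⟩
  · rintro ⟨b, hb⟩
    have hbz : (K.toCycles (c.prev n) n).hom b = z := hi <| by
      rw [← hb, ← K.toCycles_i]; rfl
    rw [← hbz]
    exact congr($(K.toCycles_comp_homologyπ _ n).hom b)

variable {C : Type*} [Category.{v} C] [Abelian C] {X X' Y : C} (P : ProjectiveResolution X)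
  {P' : ProjectiveResolution X'}

open CochainComplex HomComplex in
lemma extMk_zero_eq_zero_iff [HasExt.{w} C] {f : P.complex.X 0 ⟶ Y} (hf : P.complex.d 1 0 ≫ f = 0) :
    P.extMk f 1 rfl hf = 0 ↔ f = 0 := by
  constructor
  · intro h
    rw [← P.extEquivCohomologyClass.apply_eq_iff_eq, P.extEquivCohomologyClass_extMk,
      P.extEquivCohomologyClass_zero, CohomologyClass.mk_eq_zero_iff,
      Cocycle.toSingleMk_mem_coboundaries_iff _ _ _ _ _ 1 (by simp)] at h
    obtain ⟨g, hg⟩ := h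
    have hd : P.cochainComplex.d (-((0 : ℕ) : ℤ)) 1 = 0 :=
      (CochainComplex.isZero_of_isStrictlyLE _ 0 _ (by simp)).eq_of_tgt _ _
    rw [← cancel_epi (P.cochainComplexXIso (-((0 : ℕ) : ℤ)) 0 (by simp)).hom, ← hg, hd,
      Limits.zero_comp, Limits.comp_zero]
  · rintro rfl
    exact P.extMk_zero _ _

variable [Linear R C]

variable (R Y) in
/-- The morphism `P_n ⟶ Y` underlying a cocycle of the complex `Hom(P, Y)`. -/
noncomputable def cycleHom (n : ℕ) :
    (P.complex.linearYonedaObj R Y).cycles n →ₗ[R] (P.complex.X n ⟶ Y) :=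
  ((P.complex.linearYonedaObj R Y).iCycles n).hom

lemma d_comp_cycleHom {n : ℕ} (z : (P.complex.linearYonedaObj R Y).cycles n) :
    P.complex.d (n + 1) n ≫ cycleHom R Y P n z = 0 :=
  congr($((P.complex.linearYonedaObj R Y).iCycles_d n (n + 1)).hom z)

lemma exists_cycleHom_eq {n : ℕ} {f : P.complex.X n ⟶ Y} (hf : P.complex.d (n + 1) n ≫ f = 0) :
    ∃ z, cycleHom R Y P n z = f :=
  ⟨_, (P.complex.linearYonedaObj R Y).i_cyclesMk f (n + 1) (by simp) hf⟩

variable (R Y) {P} in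
/-- The map `Hom(P, Y) ⟶ Hom(P', Y)` induced by a morphism of complexes `P' ⟶ P`. -/
noncomputable def linearYonedaObjMap (φ : P'.complex ⟶ P.complex) :
    P.complex.linearYonedaObj R Y ⟶ P'.complex.linearYonedaObj R Y :=
  (HomologicalComplex.unopFunctor _ _).map
    ((((linearYoneda R C).obj Y).rightOp.mapHomologicalComplex _).map φ).op

variable {P} in
lemma cycleHom_cyclesMap (φ : P'.complex ⟶ P.complex) {n : ℕ}
    (z : (P.complex.linearYonedaObj R Y).cycles n) :
    cycleHom R Y P' n ((HomologicalComplex.cyclesMap (linearYonedaObjMap R Y φ) n).hom z) =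
      φ.f n ≫ cycleHom R Y P n z :=
  congr($(HomologicalComplex.cyclesMap_i (linearYonedaObjMap R Y φ) n).hom z)

section DerivedFunctorExt

variable [EnoughProjectives C]

variable (R Y) in
/-- The map sending a cocycle of `Hom(P, Y)`, for a projective resolution `P` of `X`, to its class
in `CategoryTheory.Ext`. -/
noncomputable def cycleExtClassOld (n : ℕ) :
    (P.complex.linearYonedaObj R Y).cycles n →ₗ[R] ((Ext R C n).obj (op X)).obj Y :=
  ((P.complex.linearYonedaObj R Y).homologyπ n ≫ (P.isoExt n Y).inv).hom

lemma cycleExtClassOld_surjective (n : ℕ) : Function.Surjective (cycleExtClassOld R Y P n) :=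
  (ModuleCat.epi_iff_surjective _).1 inferInstance

variable {P} in
lemma isoExt_inv_naturality {g : X' ⟶ X} (φ : Hom P' P g) (n : ℕ) :
    (P.isoExt (R := R) n Y).inv ≫ ((Ext R C n).map g.op).app Y =
      HomologicalComplex.homologyMap (linearYonedaObjMap R Y φ.hom) n ≫ (P'.isoExt n Y).inv := by
  let F := ((linearYoneda R C).obj Y).rightOp
  have h₁ : (P.isoLeftDerivedObj F n).hom.unop ≫ ((F.leftDerived n).map g).unop =
      (HomologicalComplex.homologyMap ((F.mapHomologicalComplex _).map φ.hom) n).unop ≫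
        (P'.isoLeftDerivedObj F n).hom.unop :=
    congrArg Quiver.Hom.unop (isoLeftDerivedObj_hom_naturality g P' P φ.hom
      (by simpa using φ.hom_f_zero_comp_π_f_zero) F n)
  have h₂ : (HomologicalComplex.homologyUnop _ n).hom ≫
      (HomologicalComplex.homologyMap ((F.mapHomologicalComplex _).map φ.hom) n).unop =
        HomologicalComplex.homologyMap (linearYonedaObjMap R Y φ.hom) n ≫
          (HomologicalComplex.homologyUnop _ n).hom :=
    congr($(HomologicalComplex.homologyOp_hom_naturality (linearYonedaObjMap R Y φ.hom) n).unop)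
  exact (Category.assoc _ _ _).trans (congr(_ ≫ $h₁).trans ((Category.assoc _ _ _).symm.trans
    (congr($h₂ ≫ _).trans (Category.assoc _ _ _))))

variable {P} in
lemma cycleExtClassOld_cyclesMap {g : X' ⟶ X} (φ : Hom P' P g) {n : ℕ}
    (z : (P.complex.linearYonedaObj R Y).cycles n) :
    cycleExtClassOld R Y P' n
        ((HomologicalComplex.cyclesMap (linearYonedaObjMap R Y φ.hom) n).hom z) =
      (((Ext R C n).map g.op).app Y).hom (cycleExtClassOld R Y P n z) := by
  have h : (P.complex.linearYonedaObj R Y).homologyπ n ≫ (P.isoExt n Y).inv ≫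
      ((Ext R C n).map g.op).app Y = HomologicalComplex.cyclesMap (linearYonedaObjMap R Y φ.hom) n ≫
        (P'.complex.linearYonedaObj R Y).homologyπ n ≫ (P'.isoExt n Y).inv := by
    rw [isoExt_inv_naturality φ, HomologicalComplex.homologyπ_naturality_assoc]
  exact congr($(h.symm).hom z)

end DerivedFunctorExt

section AbelianExt

variable [HasExt.{w} C]

variable (R Y) in
/-- The map sending a cocycle of `Hom(P, Y)`, for a projective resolution `P` of `X`, to its class
in `CategoryTheory.Abelian.Ext`. -/
noncomputable def cycleExtClass (n : ℕ) :
    (P.complex.linearYonedaObj R Y).cycles n →ₗ[R] Abelian.Ext X Y n where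
  toFun z := P.extMk (cycleHom R Y P n z) (n + 1) rfl (d_comp_cycleHom P z)
  map_add' z w := by simp only [P.add_extMk, map_add]
  map_smul' r z := by
    simp only [Abelian.Ext.smul_eq_comp_mk₀, P.extMk_comp_mk₀, map_smul, RingHom.id_apply,
      Linear.comp_smul, Category.comp_id]

lemma cycleExtClass_surjective (n : ℕ) : Function.Surjective (cycleExtClass R Y P n) := by
  intro e
  obtain ⟨f, hf, rfl⟩ := P.extMk_surjective e (n + 1) rfl
  obtain ⟨z, rfl⟩ := exists_cycleHom_eq (R := R) P hf
  exact ⟨z, rfl⟩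

lemma cycleExtClass_eq_zero_iff {n : ℕ} (z : (P.complex.linearYonedaObj R Y).cycles n) :
    cycleExtClass R Y P n z = 0 ↔ ((P.complex.linearYonedaObj R Y).homologyπ n).hom z = 0 := by
  rw [homologyπ_eq_zero_iff]
  cases n with
  | zero =>
    refine (extMk_zero_eq_zero_iff P (d_comp_cycleHom P z)).trans ?_
    rw [(P.complex.linearYonedaObj R Y).shape _ 0 (by simp)]
    exact ⟨fun h ↦ ⟨0, h.symm⟩, fun ⟨_, h⟩ ↦ h.symm⟩
  | succ n =>
    have hprev : (ComplexShape.up ℕ).prev (n + 1) = n := by simp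
    rw [hprev]
    exact P.extMk_eq_zero_iff _ _ rfl (d_comp_cycleHom P z) n rfl

variable {P} in
lemma cycleExtClass_cyclesMap {g : X' ⟶ X} (φ : Hom P' P g) {n : ℕ}
    (z : (P.complex.linearYonedaObj R Y).cycles n) :
    cycleExtClass R Y P' n
        ((HomologicalComplex.cyclesMap (linearYonedaObjMap R Y φ.hom) n).hom z) =
      (Abelian.Ext.mk₀ g).comp (cycleExtClass R Y P n z) (zero_add n) := by
  simp only [cycleExtClass, LinearMap.coe_mk, AddHom.coe_mk, mk₀_comp_extMk _ _ _ _ φ,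
    cycleHom_cyclesMap]

end AbelianExt

variable [EnoughProjectives C] [HasExt.{w} C]

lemma ker_cycleExtClassOld (n : ℕ) :
    LinearMap.ker (cycleExtClassOld R Y P n) = LinearMap.ker (cycleExtClass R Y P n) := by
  ext z
  have h : Function.Injective (P.isoExt (R := R) n Y).inv.hom :=
    (ModuleCat.mono_iff_injective _).1 inferInstance
  exact (map_eq_zero_iff _ h).trans (cycleExtClass_eq_zero_iff P z).symm

variable (R Y) in
/-- The comparison between Mathlib's two models of the `Ext` modules. -/
noncomputable def extEquiv (n : ℕ) :
    ((Ext R C n).obj (op X)).obj Y ≃ₗ[R] Abelian.Ext X Y n :=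
  ((cycleExtClassOld R Y P n).quotKerEquivOfSurjective (cycleExtClassOld_surjective P n)).symm ≪≫ₗ
    Submodule.quotEquivOfEq _ _ (ker_cycleExtClassOld P n) ≪≫ₗ
      (cycleExtClass R Y P n).quotKerEquivOfSurjective (cycleExtClass_surjective P n)

lemma extEquiv_cycleExtClassOld {n : ℕ} (z : (P.complex.linearYonedaObj R Y).cycles n) :
    extEquiv R Y P n (cycleExtClassOld R Y P n z) = cycleExtClass R Y P n z := by
  have h : ((cycleExtClassOld R Y P n).quotKerEquivOfSurjective
      (cycleExtClassOld_surjective P n)).symm (cycleExtClassOld R Y P n z) =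
        Submodule.Quotient.mk z := by
    rw [LinearEquiv.symm_apply_eq]
    rfl
  simp only [extEquiv, LinearEquiv.trans_apply, h]
  rfl

variable (P') in
lemma extEquiv_map (g : X' ⟶ X) (n : ℕ) (x : ((Ext R C n).obj (op X)).obj Y) :
    extEquiv R Y P' n ((((Ext R C n).map g.op).app Y).hom x) =
      (Abelian.Ext.mk₀ g).comp (extEquiv R Y P n x) (zero_add n) := by
  obtain ⟨z, rfl⟩ := cycleExtClassOld_surjective P n x
  let φ : Hom P' P g := ⟨lift g P' P, by simpa using lift_commutes_zero g P' P⟩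
  rw [← cycleExtClassOld_cyclesMap φ, extEquiv_cycleExtClassOld, extEquiv_cycleExtClassOld,
    cycleExtClass_cyclesMap φ]

end ExtComparison

section LocalCohomologyComparison

open Opposite

variable {R : Type u} [CommRing R] (a : Ideal R) (i : ℕ) (M : ModuleCat.{u} R)

/-- The direct system of the modules `Ext^i(R/a^t, M)` in `CategoryTheory.Ext`, whose colimit is
Mathlib's `localCohomology`. -/
noncomputable abbrev localCohomologyDiagramAt : ℕᵒᵖᵒᵖ ⥤ ModuleCat.{u} R :=
  localCohomology.diagram (localCohomology.idealPowersDiagram a) i ⋙ (evaluation _ _).obj M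

/-- The comparison `extEquiv` for the `t`-th term of the direct system defining local
cohomology. -/
noncomputable def localCohomologyDiagramAtEquiv (t : ℕ) :
    (localCohomologyDiagramAt a i M).obj (op (op t)) ≃ₗ[R]
      Abelian.Ext ((quotientPowers a).obj (op t)) M i :=
  extEquiv R M (projectiveResolution _) i

variable {a i M}

lemma localCohomologyDiagramAtEquiv_map {s t : ℕ} (h : s ≤ t)
    (x : (localCohomologyDiagramAt a i M).obj (op (op s))) :
    localCohomologyDiagramAtEquiv a i M t
        (((localCohomologyDiagramAt a i M).map (homOfLE h).op.op).hom x) =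
      extTransition R _ i M s t h (localCohomologyDiagramAtEquiv a i M s x) :=
  extEquiv_map _ _ _ i x

variable (a i M) in
/-- The comparison map from the direct limit of the `Ext` modules to the categorical colimit. -/
noncomputable def localCohToColimit :
    LocalCoh a i M →ₗ[R] (Limits.colimit (localCohomologyDiagramAt a i M) : ModuleCat.{u} R) :=
  Module.DirectLimit.lift R ℕ _ _
    (fun t ↦ (Limits.colimit.ι (localCohomologyDiagramAt a i M) (op (op t))).hom ∘ₗ
      (localCohomologyDiagramAtEquiv a i M t).symm.toLinearMap) fun s t h e ↦ by
    obtain ⟨x, rfl⟩ := (localCohomologyDiagramAtEquiv a i M s).surjective e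
    rw [← localCohomologyDiagramAtEquiv_map]
    simp only [LinearMap.comp_apply, LinearEquiv.coe_coe, LinearEquiv.symm_apply_apply]
    exact congr($(Limits.colimit.w (localCohomologyDiagramAt a i M) (homOfLE h).op.op).hom x)

lemma localCohToColimit_of (t : ℕ) (x : (localCohomologyDiagramAt a i M).obj (op (op t))) :
    localCohToColimit a i M
        (Module.DirectLimit.of R ℕ _ _ t (localCohomologyDiagramAtEquiv a i M t x)) =
      (Limits.colimit.ι (localCohomologyDiagramAt a i M) (op (op t))).hom x := by
  simp [localCohToColimit]

instance : Limits.PreservesColimit (localCohomologyDiagramAt a i M)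
    (forget (ModuleCat.{u} R)) := by
  have := Limits.preservesSmallestFilteredColimits_of_preservesFilteredColimits
    (forget (ModuleCat.{u} R))
  have := Limits.PreservesFilteredColimitsOfSize.preserves_filtered_colimits
    (F := forget (ModuleCat.{u} R)) ℕᵒᵖᵒᵖ
  infer_instance

lemma localCohToColimit_surjective : Function.Surjective (localCohToColimit a i M) := by
  intro y
  obtain ⟨⟨⟨t⟩⟩, x, rfl⟩ :=
    Limits.Concrete.colimit_exists_rep (localCohomologyDiagramAt a i M) y
  exact ⟨_, localCohToColimit_of t x⟩

lemma localCohToColimit_injective : Function.Injective (localCohToColimit a i M) := by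
  rw [injective_iff_map_eq_zero]
  intro y hy
  obtain ⟨s, e, rfl⟩ := Module.DirectLimit.exists_of y
  obtain ⟨x, rfl⟩ := (localCohomologyDiagramAtEquiv a i M s).surjective e
  rw [localCohToColimit_of] at hy
  obtain ⟨⟨⟨t⟩⟩, f, hf⟩ :=
    Limits.Concrete.colimit_rep_eq_zero R (localCohomologyDiagramAt a i M) (op (op s)) x hy
  have hst : s ≤ t := leOfHom f.unop.unop
  have hx : ((localCohomologyDiagramAt a i M).map (homOfLE hst).op.op).hom x = 0 := hf
  rw [← Module.DirectLimit.of_f (hij := hst), ← localCohomologyDiagramAtEquiv_map, hx, map_zero,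
    map_zero]

variable (a i M) in
/-- The comparison between `LocalCoh` and Mathlib's `localCohomology`. -/
noncomputable def localCohEquiv :
    LocalCoh a i M ≃ₗ[R] ((localCohomology a i).obj M : ModuleCat.{u} R) :=
  LinearEquiv.ofBijective (localCohToColimit a i M)
      ⟨localCohToColimit_injective, localCohToColimit_surjective⟩ ≪≫ₗ
    (Limits.colimitObjIsoColimitCompEvaluation
      (localCohomology.diagram (localCohomology.idealPowersDiagram a) i) M).symm.toLinearEquiv

end LocalCohomologyComparison

section PowTorsion

variable {R : Type u} [CommRing R] {a : Ideal R} {M N : Type v} [AddCommGroup M] [Module R M]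
  [AddCommGroup N] [Module R N]

lemma map_mem_powTorsion (f : M →ₗ[R] N) {m : M} (hm : m ∈ powTorsion a M) :
    f m ∈ powTorsion a N := by
  obtain ⟨n, hn⟩ := mem_powTorsion.1 hm
  exact mem_powTorsion.2 ⟨n, fun r hr ↦ by rw [← map_smul, hn r hr, map_zero]⟩

lemma mem_powTorsion_of_injective {f : M →ₗ[R] N} (hf : Function.Injective f) {m : M}
    (hm : f m ∈ powTorsion a N) : m ∈ powTorsion a M := by
  obtain ⟨n, hn⟩ := mem_powTorsion.1 hm
  exact mem_powTorsion.2 ⟨n, fun r hr ↦ hf (by rw [map_smul, hn r hr, map_zero])⟩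

lemma powTorsion_eq_top_of_surjective {f : M →ₗ[R] N} (hf : Function.Surjective f)
    (h : powTorsion a M = ⊤) : powTorsion a N = ⊤ := by
  refine Submodule.eq_top_iff'.2 fun y ↦ ?_
  obtain ⟨x, rfl⟩ := hf y
  exact map_mem_powTorsion f (h ▸ Submodule.mem_top)

lemma powTorsion_powTorsion : powTorsion a (powTorsion a M) = ⊤ :=
  Submodule.eq_top_iff'.2 fun m ↦
    mem_powTorsion_of_injective (powTorsion a M).injective_subtype m.2

lemma exists_le_torsionBySet_pow_of_le_powTorsion {P : Submodule R M} (hP : P.FG)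
    (h : P ≤ powTorsion a M) : ∃ n : ℕ, P ≤ Submodule.torsionBySet R M (a ^ n : Ideal R) := by
  obtain ⟨_, ⟨n, rfl⟩, hn⟩ := (Submodule.fg_iff_compact P).1 hP _ _ (Set.range_nonempty _)
    (monotone_torsionBySet_pow a M).directed_le.directedOn_range isLUB_iSup h
  exact ⟨n, hn⟩

variable [IsNoetherianRing R]

lemma powTorsion_quotient_powTorsion : powTorsion a (M ⧸ powTorsion a M) = ⊥ := by
  rw [eq_bot_iff]
  intro y hy
  obtain ⟨x, rfl⟩ := Submodule.Quotient.mk_surjective _ y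
  obtain ⟨n, hn⟩ := mem_powTorsion.1 hy
  have hle : Submodule.map (LinearMap.toSpanSingleton R M x) (a ^ n) ≤ powTorsion a M := by
    rintro _ ⟨r, hr, rfl⟩
    exact (Submodule.Quotient.mk_eq_zero _).1 (hn r hr)
  obtain ⟨k, hk⟩ := exists_le_torsionBySet_pow_of_le_powTorsion
    (Submodule.FG.map _ (a ^ n).fg_of_isNoetherianRing) hle
  rw [Submodule.mem_bot, Submodule.Quotient.mk_eq_zero, mem_powTorsion]
  refine ⟨k + n, fun r hr ↦ ?_⟩
  have hker : a ^ (k + n) ≤ LinearMap.ker (LinearMap.toSpanSingleton R M x) := by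
    rw [pow_add, Ideal.mul_le]
    intro s hs t ht
    rw [LinearMap.mem_ker, LinearMap.toSpanSingleton_apply, mul_smul]
    exact (Submodule.mem_torsionBySet_iff _ _).1 (hk ⟨t, ht, rfl⟩) ⟨s, hs⟩
  exact hker hr

lemma exists_forall_mem_pow_smul_top_apply_eq_zero [Module.Finite R N] {P : Submodule R N}
    (f : P →ₗ[R] M) (hM : powTorsion a M = ⊤) :
    ∃ n : ℕ, ∀ x : P, (x : N) ∈ a ^ n • (⊤ : Submodule R N) → f x = 0 := by
  obtain ⟨n, hn⟩ :=
    exists_le_torsionBySet_pow_of_le_powTorsion (Module.Finite.fg_top.map f) (hM ▸ le_top)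
  have hker : a ^ n • (⊤ : Submodule R P) ≤ LinearMap.ker f := by
    refine Submodule.smul_le.2 fun r hr x _ ↦ ?_
    rw [LinearMap.mem_ker, map_smul]
    exact (Submodule.mem_torsionBySet_iff _ _).1 (hn ⟨x, trivial, rfl⟩) ⟨r, hr⟩
  obtain ⟨k, hk⟩ := Ideal.exists_pow_inf_eq_pow_smul a P
  have hle : a ^ (n + k) • (⊤ : Submodule R N) ⊓ P ≤
      (a ^ n • (⊤ : Submodule R P)).map P.subtype := by
    rw [hk (n + k) (Nat.le_add_left k n), Nat.add_sub_cancel, Submodule.map_smul'',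
      Submodule.map_subtype_top]
    exact smul_mono_right _ inf_le_right
  refine ⟨n + k, fun x hx ↦ ?_⟩
  obtain ⟨y, hy, hyx⟩ := hle ⟨hx, x.2⟩
  rw [← Subtype.ext hyx]
  exact hker hy

lemma exists_extend_to_powTorsion {E : Type u} [AddCommGroup E] [Module R E]
    [Module.Injective R E] (J : Ideal R) (f : J →ₗ[R] powTorsion a E) :
    ∃ g : R →ₗ[R] powTorsion a E, ∀ x : J, g x = f x := by
  obtain ⟨n, hn⟩ := exists_forall_mem_pow_smul_top_apply_eq_zero f powTorsion_powTorsion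
  rw [smul_eq_mul, Ideal.mul_top] at hn
  -- `f` factors through `J/(J ∩ a^n) ⊆ R/a^n`, on which every map to `E` lands in `Γ_a(E)`.
  let ι : (J ⧸ Submodule.comap J.subtype (a ^ n)) →ₗ[R] R ⧸ a ^ n :=
    Submodule.mapQ _ _ J.subtype le_rfl
  have hι : Function.Injective ι := by
    refine LinearMap.ker_eq_bot.1 (Submodule.ker_liftQ_eq_bot _ _ _ ?_)
    rw [LinearMap.ker_comp, Submodule.ker_mkQ]
  let f' : (J ⧸ Submodule.comap J.subtype (a ^ n)) →ₗ[R] E :=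
    Submodule.liftQ _ ((powTorsion a E).subtype ∘ₗ f) fun x hx ↦ by
      rw [LinearMap.mem_ker, LinearMap.comp_apply, hn x hx, map_zero]
  obtain ⟨h, hh⟩ := Module.Injective.out ι hι f'
  refine ⟨(h ∘ₗ (a ^ n).mkQ).codRestrict _ fun r ↦ ?_, fun x ↦ Subtype.ext ?_⟩
  · refine map_mem_powTorsion h (mem_powTorsion.2 ⟨n, fun s hs ↦ ?_⟩)
    exact (Submodule.Quotient.mk_eq_zero _).2 (Ideal.mul_mem_right r _ hs)
  · exact hh (Submodule.Quotient.mk x)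

instance (E : Type u) [AddCommGroup E] [Module R E] [Module.Injective R E] :
    Module.Injective R (powTorsion a E) :=
  Module.Baer.injective fun J f ↦ by
    obtain ⟨g, hg⟩ := exists_extend_to_powTorsion J f
    exact ⟨g, fun x hx ↦ hg ⟨x, hx⟩⟩

instance (E : Type u) [AddCommGroup E] [Module R E] [Module.Injective R E] :
    Module.Injective R (E ⧸ powTorsion a E) := by
  obtain ⟨ρ, hρ⟩ := Module.Injective.out (powTorsion a E).subtype
    (powTorsion a E).injective_subtype LinearMap.id
  let s : (E ⧸ powTorsion a E) →ₗ[R] E := (LinearMap.ker ρ).subtype ∘ₗ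
    Submodule.quotientEquivOfIsCompl _ _ (LinearMap.isCompl_of_proj hρ)
  have hs : ∀ y, (powTorsion a E).mkQ (s y) = y :=
    (Submodule.quotientEquivOfIsCompl _ _ (LinearMap.isCompl_of_proj hρ)).symm_apply_apply
  refine ⟨fun X Y _ _ _ _ f hf g ↦ ?_⟩
  obtain ⟨h, hh⟩ := Module.Injective.out f hf (s ∘ₗ g)
  exact ⟨(powTorsion a E).mkQ ∘ₗ h, fun x ↦ by
    rw [LinearMap.comp_apply, hh, LinearMap.comp_apply, hs]⟩

end PowTorsion

section Exact

variable {R : Type*} [CommRing R] {A B C D : Type*} [AddCommGroup A] [Module R A] [AddCommGroup B]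
  [Module R B] [AddCommGroup C] [Module R C] [AddCommGroup D] [Module R D] {f : A →ₗ[R] B}
  {g : B →ₗ[R] C} {h : C →ₗ[R] D}

lemma subsingleton_of_exact [Subsingleton A] [Subsingleton C] (H : Function.Exact f g) :
    Subsingleton B := by
  refine subsingleton_of_forall_eq 0 fun b ↦ ?_
  obtain ⟨a, rfl⟩ := (H b).1 (Subsingleton.elim _ _)
  rw [Subsingleton.elim a 0, map_zero]

lemma bijective_of_exact [Subsingleton A] [Subsingleton D] (H : Function.Exact f g)
    (H' : Function.Exact g h) : Function.Bijective g := by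
  refine ⟨(injective_iff_map_eq_zero _).2 fun b hb ↦ ?_, fun c ↦ (H' c).1 (Subsingleton.elim _ _)⟩
  obtain ⟨a, rfl⟩ := (H b).1 hb
  rw [Subsingleton.elim a 0, map_zero]

end Exact

lemma shortExact_cokernel {C : Type*} [Category* C] [Abelian C] {M N : C} (f : M ⟶ N) [Mono f] :
    (ShortComplex.mk f (Limits.cokernel.π f) (Limits.cokernel.condition f)).ShortExact :=
  .mk' (ShortComplex.exact_cokernel f) inferInstance inferInstance

section ExtColimit

open Abelian

variable {R : Type*} [CommRing R] {ι : Type*} [Preorder ι] [DecidableEq ι] [IsDirectedOrder ι]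
  [Nonempty ι] {C : Type*} [Category* C] [Abelian C] [Linear R C] [HasExt.{w} C] {X : ιᵒᵖ ⥤ C}
  {S : ShortComplex C}

namespace ExtColimit

lemma postcomp_extClass_bijective (hS : S.ShortExact) {i : ℕ}
    (_ : Subsingleton (ExtColimit R X i S.X₂)) (_ : Subsingleton (ExtColimit R X (i + 1) S.X₂)) :
    Function.Bijective (postcomp R X hS.extClass (rfl : i + 1 = i + 1)) :=
  bijective_of_exact (exact₃ hS i) (exact₁ hS i)

lemma postcomp_mk₀_g_bijective (hS : S.ShortExact) {i : ℕ}
    (_ : Subsingleton (ExtColimit R X i S.X₁)) (_ : Subsingleton (ExtColimit R X (i + 1) S.X₁)) :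
    Function.Bijective (postcomp R X (Ext.mk₀ S.g) (add_zero i)) :=
  bijective_of_exact (exact₂ hS i) (exact₃ hS i)

end ExtColimit

end ExtColimit

section ExtFinite

open Abelian

variable (R : Type*) [CommRing R] {C : Type*} [Category* C] [Abelian C] [Linear R C]
  [HasExt.{w} C] (X : C)

/-- All the modules `Ext^i(X, N)` are noetherian. For `X = R/a` this is the finiteness condition in
the definition of an `a`-cofinite module `N`. -/
def ExtFinite (N : C) : Prop :=
  ∀ i : ℕ, IsNoetherian R (Ext X N i)

namespace ExtFinite

variable {R X} {S : ShortComplex C}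

lemma of_subsingleton {N : C} (h : ∀ i, Subsingleton (Ext X N i)) : ExtFinite R X N :=
  fun i ↦ have := h i; inferInstance

lemma of_iso {M N : C} (e : M ≅ N) (h : ExtFinite R X M) : ExtFinite R X N := by
  intro i
  have := h i
  refine isNoetherian_of_injective ((Ext.mk₀ e.inv).postcompOfLinear R X (add_zero i))
    (Function.LeftInverse.injective
      (g := (Ext.mk₀ e.hom).postcompOfLinear R X (add_zero i)) fun x ↦ ?_)
  change (x.comp (Ext.mk₀ e.inv) (add_zero i)).comp (Ext.mk₀ e.hom) (add_zero i) = x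
  rw [Ext.comp_assoc_of_third_deg_zero, Ext.mk₀_comp_mk₀, e.inv_hom_id, Ext.comp_mk₀_id]

lemma middle (hS : S.ShortExact) (h₁ : ExtFinite R X S.X₁) (h₃ : ExtFinite R X S.X₃) :
    ExtFinite R X S.X₂ := by
  intro i
  have := h₁ i
  have := h₃ i
  exact isNoetherian_of_range_eq_ker _ _
    (function_exact_postcomp₂ (R := R) X hS i).linearMap_ker_eq.symm

lemma right (hS : S.ShortExact) (h₁ : ExtFinite R X S.X₁) (h₂ : ExtFinite R X S.X₂) :
    ExtFinite R X S.X₃ := by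
  intro i
  have := h₂ i
  have := h₁ (i + 1)
  exact isNoetherian_of_range_eq_ker _ _
    (function_exact_postcomp₃ (R := R) X hS i).linearMap_ker_eq.symm

lemma left (hS : S.ShortExact) (h₂ : ExtFinite R X S.X₂) (h₃ : ExtFinite R X S.X₃) :
    ExtFinite R X S.X₁ := by
  rintro (_ | i)
  · have := hS.mono_f
    have := h₂ 0
    exact isNoetherian_of_injective ((Ext.mk₀ S.f).postcompOfLinear R X (add_zero 0))
      (Ext.postcomp_mk₀_injective_of_mono X S.f)
  · have := h₃ i
    have := h₂ (i + 1)
    exact isNoetherian_of_range_eq_ker _ _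
      (function_exact_postcomp₁ (R := R) X hS i).linearMap_ker_eq.symm

end ExtFinite

end ExtFinite

section DimensionShifting

open Abelian

variable {R : Type u} [CommRing R] {a : Ideal R}

namespace LocalCoh

variable {M N : ModuleCat.{u} R}

lemma subsingleton_zero_iff : Subsingleton (LocalCoh a 0 M) ↔ powTorsion a M = ⊥ :=
  (equivPowTorsion a M).toEquiv.subsingleton_congr.trans Submodule.subsingleton_iff_eq_bot

lemma postcomp_surjective_of_epi (f : M ⟶ N) [Epi f] (hM : powTorsion a M = ⊤) :
    Function.Surjective (ExtColimit.postcomp R (quotientPowers a) (Ext.mk₀ f) (add_zero 0)) := by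
  intro y
  obtain ⟨m, hm⟩ := (ModuleCat.epi_iff_surjective f).1 inferInstance (eval a N y)
  obtain ⟨x, rfl⟩ : m ∈ LinearMap.range (eval a M) := by rw [range_eval, hM]; trivial
  exact ⟨x, eval_injective ((eval_postcomp_mk₀ f x).trans hm)⟩

variable [IsNoetherianRing R]

lemma exists_mono_injective_of_powTorsion_eq_top (hM : powTorsion a M = ⊤) :
    ∃ (E : ModuleCat.{u} R) (f : M ⟶ E), Injective E ∧ Mono f ∧ powTorsion a E = ⊤ := by
  obtain ⟨⟨E, hE, ι, hι⟩⟩ := EnoughInjectives.presentation M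
  have := Module.injective_module_of_injective_object R E
  let f : M →ₗ[R] powTorsion a E := ι.hom.codRestrict _ fun m ↦
    map_mem_powTorsion _ (hM ▸ Submodule.mem_top)
  exact ⟨ModuleCat.of R (powTorsion a E), ModuleCat.ofHom f,
    Module.injective_object_of_injective_module R (powTorsion a E),
    (ModuleCat.mono_iff_injective _).2
      ((LinearMap.injective_codRestrict_iff ..).2 ((ModuleCat.mono_iff_injective _).1 hι)),
    powTorsion_powTorsion⟩

lemma subsingleton_succ_of_powTorsion_eq_top (i : ℕ) (hM : powTorsion a M = ⊤) :
    Subsingleton (LocalCoh a (i + 1) M) := by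
  induction i generalizing M with
  | zero =>
    obtain ⟨E, f, _, _, hE⟩ := exists_mono_injective_of_powTorsion_eq_top hM
    have hS := shortExact_cokernel f
    have : Subsingleton (LocalCoh a 1 E) := ExtColimit.subsingleton_of_injective 0
    refine subsingleton_of_forall_eq 0 fun x ↦ ?_
    obtain ⟨y, rfl⟩ := (ExtColimit.exact₁ hS 0 x).1 (Subsingleton.elim _ _)
    exact (ExtColimit.exact₃ hS 0 y).2 (postcomp_surjective_of_epi _ hE y)
  | succ i ih =>
    obtain ⟨E, f, _, _, hE⟩ := exists_mono_injective_of_powTorsion_eq_top hM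
    have hS := shortExact_cokernel f
    have : Subsingleton (LocalCoh a (i + 2) E) := ExtColimit.subsingleton_of_injective (i + 1)
    have : Subsingleton (LocalCoh a (i + 1) (Limits.cokernel f)) :=
      ih (powTorsion_eq_top_of_surjective
        ((ModuleCat.epi_iff_surjective (Limits.cokernel.π f)).1 inferInstance) hE)
    exact subsingleton_of_exact (ExtColimit.exact₁ (X := quotientPowers a) hS (i + 1))

end LocalCoh

variable {M : ModuleCat.{u} R}

lemma subsingleton_ext_zero_of_powTorsion_eq_bot (hM : powTorsion a M = ⊥) :
    Subsingleton (Ext (ModuleCat.of R (R ⧸ a)) M 0) := by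
  refine subsingleton_of_forall_eq 0 fun e ↦ extEvalOne_injective a M ?_
  rw [map_zero, ← Submodule.mem_bot R, ← hM, mem_powTorsion]
  refine ⟨1, fun r hr ↦ ?_⟩
  rw [← map_smul, ext_smul_eq_zero (pow_one a ▸ hr), map_zero]

variable [IsNoetherianRing R]

lemma exists_ker_eq_powTorsion (a : Ideal R) (M : ModuleCat.{u} R) :
    ∃ (E : ModuleCat.{u} R) (f : M ⟶ E), LinearMap.ker f.hom = powTorsion a M ∧
      (∀ i, Subsingleton (LocalCoh a i E)) ∧
      ∀ i, Subsingleton (Ext (ModuleCat.of R (R ⧸ a)) E i) := by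
  obtain ⟨⟨E, _, ι, hι⟩⟩ := EnoughInjectives.presentation M
  have := Module.injective_module_of_injective_object R E
  have := Module.injective_object_of_injective_module R (E ⧸ powTorsion a E)
  have hE : powTorsion a (ModuleCat.of R (E ⧸ powTorsion a E)) = ⊥ :=
    powTorsion_quotient_powTorsion
  refine ⟨ModuleCat.of R (E ⧸ powTorsion a E),
    ι ≫ ModuleCat.ofHom (powTorsion a E).mkQ, ?_, fun i ↦ ?_, fun i ↦ ?_⟩
  · ext m
    rw [ModuleCat.hom_comp, LinearMap.ker_comp, ModuleCat.hom_ofHom, Submodule.ker_mkQ,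
      Submodule.mem_comap]
    exact ⟨mem_powTorsion_of_injective ((ModuleCat.mono_iff_injective _).1 hι),
      map_mem_powTorsion _⟩
  · cases i with
    | zero => exact LocalCoh.subsingleton_zero_iff.2 hE
    | succ i => exact ExtColimit.subsingleton_of_injective i
  · cases i with
    | zero => exact subsingleton_ext_zero_of_powTorsion_eq_bot hE
    | succ i => exact subsingleton_of_forall_eq 0 Ext.eq_zero_of_injective

lemma subsingleton_ext_of_forall_subsingleton_localCoh (hM : ∀ i, Subsingleton (LocalCoh a i M))
    (i : ℕ) : Subsingleton (Ext (ModuleCat.of R (R ⧸ a)) M i) := by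
  have hbot := LocalCoh.subsingleton_zero_iff.1 (hM 0)
  induction i generalizing M with
  | zero => exact subsingleton_ext_zero_of_powTorsion_eq_bot hbot
  | succ i ih =>
    obtain ⟨E, f, hf, hLC, hExt⟩ := exists_ker_eq_powTorsion a M
    have : Mono f := (ModuleCat.mono_iff_ker_eq_bot f).2 (hf.trans hbot)
    have hS := shortExact_cokernel f
    have hN (j : ℕ) : Subsingleton (LocalCoh a j (Limits.cokernel f)) :=
      have := hLC j
      have := hM (j + 1)
      subsingleton_of_exact (ExtColimit.exact₃ (X := quotientPowers a) hS j)
    have := ih hN (LocalCoh.subsingleton_zero_iff.1 (hN 0))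
    have := hExt (i + 1)
    exact subsingleton_of_exact (function_exact_postcomp₁ (R := R) (ModuleCat.of R (R ⧸ a)) hS i)

lemma exists_localCoh_shift (a : Ideal R) (M : ModuleCat.{u} R) :
    ∃ N : ModuleCat.{u} R, (∀ i, Nonempty (LocalCoh a i N ≃ₗ[R] LocalCoh a (i + 1) M)) ∧
      (ExtFinite R (ModuleCat.of R (R ⧸ a)) (ModuleCat.of R (LocalCoh a 0 M)) →
        (ExtFinite R (ModuleCat.of R (R ⧸ a)) M ↔ ExtFinite R (ModuleCat.of R (R ⧸ a)) N)) ∧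
      (ExtFinite R (ModuleCat.of R (R ⧸ a)) M → ExtFinite R (ModuleCat.of R (R ⧸ a)) N →
        ExtFinite R (ModuleCat.of R (R ⧸ a)) (ModuleCat.of R (LocalCoh a 0 M))) := by
  obtain ⟨E, f, hf, hLC, hExt⟩ := exists_ker_eq_powTorsion a M
  let ι : ModuleCat.of R (LinearMap.range f.hom) ⟶ E :=
    ModuleCat.ofHom (LinearMap.range f.hom).subtype
  have : Mono ι := (ModuleCat.mono_iff_injective _).2 (LinearMap.range f.hom).injective_subtype
  have hS := shortExact_cokernel ι
  have hT := LinearMap.shortExact_shortComplexKer f.hom.surjective_rangeRestrict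
  have hker : LinearMap.ker f.hom.rangeRestrict = powTorsion a M := f.hom.ker_rangeRestrict.trans hf
  have htop : powTorsion a (LinearMap.ker f.hom.rangeRestrict) = ⊤ := by
    rw [hker, powTorsion_powTorsion]
  have e : ModuleCat.of R (LinearMap.ker f.hom.rangeRestrict) ≅ ModuleCat.of R (LocalCoh a 0 M) :=
    (LinearEquiv.ofEq _ _ hker ≪≫ₗ (LocalCoh.equivPowTorsion a M).symm).toModuleIso
  have hE : ExtFinite R (ModuleCat.of R (R ⧸ a)) E := .of_subsingleton hExt
  refine ⟨Limits.cokernel ι, fun i ↦ ⟨?_⟩, fun h₀ ↦ ⟨fun hM ↦ ?_, fun hN ↦ ?_⟩, fun hM hN ↦ ?_⟩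
  · have e₁ := LinearEquiv.ofBijective _
      (ExtColimit.postcomp_extClass_bijective hS (hLC i) (hLC (i + 1)))
    have e₂ := LinearEquiv.ofBijective _ (ExtColimit.postcomp_mk₀_g_bijective hT
      (LocalCoh.subsingleton_succ_of_powTorsion_eq_top i htop)
      (LocalCoh.subsingleton_succ_of_powTorsion_eq_top (i + 1) htop))
    exact e₁ ≪≫ₗ e₂.symm
  · exact .right hS (.right hT (h₀.of_iso e.symm) hM) hE
  · exact .middle hT (h₀.of_iso e.symm) (.left hS hE hN)
  · exact (ExtFinite.left hT hM (.left hS hE hN)).of_iso e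

end DimensionShifting

section ArtinianCofiniteExt

open Abelian

namespace IsArtinianCofinite

lemma of_torsionBy {R : Type*} [CommRing R] {S : Set R} {A : Type*} [AddCommGroup A] [Module R A]
    {x : R} (hxS : x ∈ S) (hx : ∀ m : A, ∃ n : ℕ, x ^ n • m = 0)
    (h : IsArtinianCofinite S (Submodule.torsionBy R A x)) : IsArtinianCofinite S A := by
  have := h.1
  refine ⟨isArtinian_of_isArtinian_torsionBy hx, ?_⟩
  rw [← Set.insert_eq_of_mem hxS]
  exact isNoetherian_torsionBySet_torsionBy_iff.1 h.2

lemma pi {R : Type*} [CommRing R] {S : Set R} {ι : Type*} [Finite ι] {A : ι → Type*}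
    [∀ j, AddCommGroup (A j)] [∀ j, Module R (A j)] (hA : ∀ j, IsArtinianCofinite S (A j)) :
    IsArtinianCofinite S (∀ j, A j) := by
  have (j : ι) := (hA j).1
  have (j : ι) := (hA j).2
  refine ⟨inferInstance, isNoetherian_of_injective (LinearMap.pi fun j ↦
    (LinearMap.proj j).restrict (map_mem_torsionBySet (A := ∀ j, A j) (LinearMap.proj j)))
    fun x y hxy ↦ Subtype.ext (funext fun j ↦ congrArg Subtype.val (congrFun hxy j))⟩

variable {R : Type u} [CommRing R] [IsNoetherianRing R] {S : Set R} {A : ModuleCat.{u} R}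

lemma ext (hA : IsArtinianCofinite S A) (N : ModuleCat.{u} R) [Module.Finite R N] (i : ℕ) :
    IsArtinianCofinite S (Ext N A i) := by
  induction i generalizing N with
  | zero =>
    obtain ⟨n, f, hf⟩ := Module.Finite.exists_fin' R N
    let e : Ext N A 0 ≃ₗ[R] (N →ₗ[R] A) := Ext.linearEquiv₀ ≪≫ₗ ModuleCat.homLinearEquiv
    exact (((pi fun _ ↦ hA).of_injective (LinearEquiv.piRing R A (Fin n) R).injective).of_injective
      (LinearMap.lcomp_injective_of_surjective f hf)).of_injective e.injective
  | succ n ih =>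
    obtain ⟨L, _, _, _, _, f, hf⟩ := Module.exists_finite_presentation R N
    have hS := LinearMap.shortExact_shortComplexKer hf
    exact (ih (ModuleCat.of R (LinearMap.ker f))).of_surjective
      (g := hS.extClass.precompOfLinear R A (add_comm 1 n))
      (precomp_extClass_surjective_of_projective_X₂ A hS n)

lemma extFinite {a : Ideal R} (hA : IsArtinianCofinite (a : Set R) A) :
    ExtFinite R (ModuleCat.of R (R ⧸ a)) A := by
  intro i
  have := (hA.ext (ModuleCat.of R (R ⧸ a)) i).2
  exact isNoetherian_of_injective (LinearMap.id.codRestrict _ fun e ↦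
    (Submodule.mem_torsionBySet_iff _ _).2 fun r ↦ ext_smul_eq_zero r.2 e)
    ((LinearMap.injective_codRestrict_iff ..).2 Function.injective_id)

end IsArtinianCofinite

end ArtinianCofiniteExt

lemma isArtinian_of_supportDim_le_zero {R : Type*} [CommRing R] [IsNoetherianRing R] {M : Type*}
    [AddCommGroup M] [Module R M] [Module.Finite R M] (hM : Module.supportDim R M ≤ 0) :
    IsArtinian R M := by
  rw [Module.supportDim_eq_ringKrullDim_quotient_annihilator] at hM
  have : Ring.KrullDimLE 0 (R ⧸ Module.annihilator R M) := Ring.krullDimLE_iff.2 hM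
  have := IsNoetherianRing.isArtinianRing_of_krullDimLE_zero (R := R ⧸ Module.annihilator R M)
  let := Module.quotientAnnihilator (R := R) (M := M)
  have := Module.IsTorsionBySet.isScalarTower (S := R) (Module.isTorsionBySet_annihilator R M)
  have : Module.Finite (R ⧸ Module.annihilator R M) M := .of_restrictScalars_finite R _ _
  exact isArtinian_of_surjective_algebraMap (R := R ⧸ Module.annihilator R M)
    Ideal.Quotient.mk_surjective

section SupportDim

open Abelian

variable {R : Type u} [CommRing R] {a : Ideal R}

namespace LocalCoh

lemma exists_pow_smul_eq_zero_of_mem {M : ModuleCat.{u} R} {x : R} (hx : x ∈ a) {i : ℕ}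
    (z : LocalCoh a i M) : ∃ n : ℕ, x ^ n • z = 0 :=
  (exists_pow_smul_eq_zero z).imp fun n hn ↦ hn _ (Ideal.pow_mem_pow hx n)

lemma torsionBy_le_range_of_isSMulRegular {M : ModuleCat.{u} R} {x : R}
    (hx : IsSMulRegular M x) (i : ℕ) :
    Submodule.torsionBy R (LocalCoh a (i + 1) M) x ≤
      LinearMap.range (ExtColimit.postcomp R (quotientPowers a)
        hx.smulShortComplex_shortExact.extClass (rfl : i + 1 = i + 1)) := by
  intro z hz
  refine (ExtColimit.exact₁ (X := quotientPowers a) hx.smulShortComplex_shortExact i z).1 ?_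
  exact (ExtColimit.postcomp_smul_id x z).trans hz

variable [IsNoetherianRing R] (M : ModuleCat.{u} R) [Module.Finite R M]

variable {M} in
lemma exists_isSMulRegular_of_powTorsion_eq_bot (hM : powTorsion a M = ⊥) :
    ∃ x ∈ a, IsSMulRegular M x := by
  have := subsingleton_ext_zero_of_powTorsion_eq_bot hM
  have e : Ext (ModuleCat.of R (R ⧸ a)) M 0 ≃ₗ[R] (R ⧸ a →ₗ[R] M) :=
    Ext.linearEquiv₀ ≪≫ₗ ModuleCat.homLinearEquiv
  obtain ⟨x, hxa, hx⟩ := IsSMulRegular.subsingleton_linearMap_iff.1 e.symm.subsingleton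
  exact ⟨x, Ideal.annihilator_quotient (I := a) ▸ hxa, hx⟩

variable (a) in
-- Passing from `M` to `M' = M / Γ_a(M)` does not change `H^(i+1)_a`, and some `x ∈ a` is regular on
-- `M'`; then `H^i_a(M' / xM')` surjects onto the `x`-torsion of `H^(i+1)_a(M')`.
theorem exists_torsionBy_le_range :
    ∃ (N : ModuleCat.{u} R) (x : R), Module.Finite R N ∧ x ∈ a ∧
      Module.supportDim R N + 1 ≤ Module.supportDim R M ∧
      ∀ i, ∃ δ : LocalCoh a i N →ₗ[R] LocalCoh a (i + 1) M,
        Submodule.torsionBy R (LocalCoh a (i + 1) M) x ≤ LinearMap.range δ := by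
  have hS := LinearMap.shortExact_shortComplexKer (powTorsion a M).mkQ_surjective
  have htop : powTorsion a (LinearMap.ker (powTorsion a M).mkQ) = ⊤ := by
    rw [Submodule.ker_mkQ, powTorsion_powTorsion]
  let Q : ModuleCat.{u} R := ModuleCat.of R (M ⧸ powTorsion a M)
  obtain ⟨x, hxa, hx⟩ := exists_isSMulRegular_of_powTorsion_eq_bot (a := a) (M := Q)
    powTorsion_quotient_powTorsion
  refine ⟨ModuleCat.of R (QuotSMulTop x Q), x, inferInstance, hxa, ?_, fun i ↦ ?_⟩
  · exact (Module.supportDim_quotSMulTop_succ_le_of_notMem_minimalPrimes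
      fun _ ↦ hx.notMem_of_mem_minimalPrimes).trans
      (Module.supportDim_le_of_surjective _ (powTorsion a M).mkQ_surjective)
  · let e : LocalCoh a (i + 1) M ≃ₗ[R] LocalCoh a (i + 1) Q :=
      LinearEquiv.ofBijective _ (ExtColimit.postcomp_mk₀_g_bijective hS
        (subsingleton_succ_of_powTorsion_eq_top i htop)
        (subsingleton_succ_of_powTorsion_eq_top (i + 1) htop))
    refine ⟨e.symm.toLinearMap ∘ₗ ExtColimit.postcomp R (quotientPowers a)
      hx.smulShortComplex_shortExact.extClass (rfl : i + 1 = i + 1), fun z hz ↦ ?_⟩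
    obtain ⟨y, hy⟩ :=
      torsionBy_le_range_of_isSMulRegular hx i (map_mem_torsionBy e.toLinearMap z hz)
    exact ⟨y, (congrArg e.symm hy).trans (e.symm_apply_apply z)⟩

theorem subsingleton_of_supportDim_lt {i : ℕ} (hM : Module.supportDim R M < i) :
    Subsingleton (LocalCoh a i M) := by
  induction i generalizing M with
  | zero =>
    have : Subsingleton M := by
      rw [← Module.supportDim_eq_bot_iff_subsingleton R]
      exact (WithBot.lt_zero_iff_eq_bot _).1 (by simpa using hM)
    exact eval_injective.subsingleton
  | succ i ih =>
    obtain ⟨N, x, _, hxa, hN, hδ⟩ := exists_torsionBy_le_range a M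
    obtain ⟨δ, hδ⟩ := hδ i
    have hi : Module.supportDim R N + 1 ≤ i := hN.trans (ENat.WithBot.lt_add_one_iff.1 hM)
    have := ih N (ENat.WithBot.add_one_le_natCast_iff.1 hi)
    have hx : IsSMulRegular (LocalCoh a (i + 1) M) x := by
      refine (isSMulRegular_iff_right_eq_zero_of_smul).2 fun z hz ↦ ?_
      obtain ⟨y, rfl⟩ := hδ hz
      rw [Subsingleton.elim y 0, map_zero]
    refine subsingleton_of_forall_eq 0 fun z ↦ ?_
    obtain ⟨n, hn⟩ := exists_pow_smul_eq_zero_of_mem hxa z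
    exact (isSMulRegular_iff_right_eq_zero_of_smul).1 (hx.pow n) z hn

theorem isArtinianCofinite_of_supportDim_le {i : ℕ} (hM : Module.supportDim R M ≤ i) :
    IsArtinianCofinite (a : Set R) (LocalCoh a i M) := by
  induction i generalizing M with
  | zero =>
    have := isArtinian_of_supportDim_le_zero hM
    exact .of_injective ⟨inferInstance, inferInstance⟩ eval_injective
  | succ i ih =>
    obtain ⟨N, x, _, hxa, hN, hδ⟩ := exists_torsionBy_le_range a M
    obtain ⟨δ, hδ⟩ := hδ i
    have hH := ih N (ENat.WithBot.add_le_add_one_right_iff.1 (hN.trans hM))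
    have hδ' := hH.of_surjective δ.surjective_rangeRestrict
    exact .of_torsionBy hxa (exists_pow_smul_eq_zero_of_mem hxa)
      (hδ'.of_injective (Submodule.inclusion_injective hδ))

end LocalCoh

end SupportDim

section Cofinite

open Abelian

variable {R : Type u} [CommRing R] {a : Ideal R} {M : ModuleCat.{u} R}

lemma support_localCohomology_subset (i : ℕ) :
    Module.support R ((localCohomology a i).obj M : ModuleCat.{u} R) ⊆
      PrimeSpectrum.zeroLocus (a : Set R) := by
  rw [← (localCohEquiv a i M).support_eq]
  intro p hp
  obtain ⟨x, hx⟩ := Module.mem_support_iff_exists_annihilator.1 hp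
  obtain ⟨n, hn⟩ := LocalCoh.exists_pow_smul_eq_zero x
  refine p.2.le_of_pow_le (n := n) (le_trans (fun r hr ↦ ?_) hx)
  exact (Submodule.mem_annihilator_span_singleton _ _).2 (hn r hr)

lemma isCofinite_localCohomology {i : ℕ}
    (h : ExtFinite R (ModuleCat.of R (R ⧸ a)) (ModuleCat.of R (LocalCoh a i M))) :
    IsCofinite a ((localCohomology a i).obj M) := by
  refine ⟨support_localCohomology_subset i, fun j ↦ ?_⟩
  have := h.of_iso (localCohEquiv a i M).toModuleIso j
  exact Module.Finite.equiv (extEquiv R ((localCohomology a i).obj M)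
    (projectiveResolution (ModuleCat.of R (R ⧸ a))) j).symm

variable [IsNoetherianRing R]

lemma extFinite_of_extFinite_localCoh {n : ℕ} (hn : ∀ i, n ≤ i → Subsingleton (LocalCoh a i M))
    (h : ∀ i, ExtFinite R (ModuleCat.of R (R ⧸ a)) (ModuleCat.of R (LocalCoh a i M))) :
    ExtFinite R (ModuleCat.of R (R ⧸ a)) M := by
  induction n generalizing M with
  | zero =>
    exact .of_subsingleton (subsingleton_ext_of_forall_subsingleton_localCoh fun i ↦ hn i i.zero_le)
  | succ n ih =>
    obtain ⟨N, e, hMN, -⟩ := exists_localCoh_shift a M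
    refine (hMN (h 0)).2 (ih (fun i hi ↦ ?_) fun i ↦ (h (i + 1)).of_iso (e i).some.symm.toModuleIso)
    have := hn (i + 1) (by lia)
    exact (e i).some.toEquiv.subsingleton

-- In the spectral sequence `Ext^p(R/a, H^q_a(M)) ⇒ Ext^(p+q)(R/a, M)` a single row cannot be the
-- only one with terms that are not finitely generated.
theorem extFinite_localCoh_of_forall_ne {n : ℕ}
    (hn : ∀ i, n ≤ i → Subsingleton (LocalCoh a i M))
    (hM : ExtFinite R (ModuleCat.of R (R ⧸ a)) M) (s : ℕ)
    (h : ∀ i ≠ s, ExtFinite R (ModuleCat.of R (R ⧸ a)) (ModuleCat.of R (LocalCoh a i M))) :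
    ExtFinite R (ModuleCat.of R (R ⧸ a)) (ModuleCat.of R (LocalCoh a s M)) := by
  induction s generalizing M with
  | zero =>
    obtain ⟨N, e, -, hN⟩ := exists_localCoh_shift a M
    refine hN hM (extFinite_of_extFinite_localCoh (n := n) (fun i hi ↦ ?_) fun i ↦
      (h (i + 1) i.succ_ne_zero).of_iso (e i).some.symm.toModuleIso)
    have := hn (i + 1) (by lia)
    exact (e i).some.toEquiv.subsingleton
  | succ s ih =>
    obtain ⟨N, e, hMN, -⟩ := exists_localCoh_shift a M
    refine (ih (fun i hi ↦ ?_) ((hMN (h 0 s.succ_ne_zero.symm)).1 hM) fun i hi ↦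
      (h (i + 1) (by lia)).of_iso (e i).some.symm.toModuleIso).of_iso (e s).some.toModuleIso
    have := hn (i + 1) (by lia)
    exact (e i).some.toEquiv.subsingleton

end Cofinite

theorem stmt7_general {R : Type u} [CommRing R] [IsNoetherianRing R] (a : Ideal R)
    (M : ModuleCat.{u} R) [Module.Finite R M] (hM : Module.supportDim R M ≤ 2) (i : ℕ) :
    IsCofinite a ((localCohomology a i).obj M) := by
  have extFinite_of_finite (N : ModuleCat.{u} R) [Module.Finite R N] :
      ExtFinite R (ModuleCat.of R (R ⧸ a)) N := fun j ↦
    have := ModuleCat.finite_ext R (ModuleCat.of R (R ⧸ a)) N j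
    inferInstance
  have h₃ (i : ℕ) (hi : 3 ≤ i) : Subsingleton (LocalCoh a i M) :=
    LocalCoh.subsingleton_of_supportDim_lt M (hM.trans_lt (by exact_mod_cast hi))
  have h (i : ℕ) (hi : i ≠ 1) :
      ExtFinite R (ModuleCat.of R (R ⧸ a)) (ModuleCat.of R (LocalCoh a i M)) := by
    obtain rfl | rfl | hi : i = 0 ∨ i = 2 ∨ 3 ≤ i := by lia
    · have : Module.Finite R (LocalCoh a 0 M) := .of_injective _ LocalCoh.eval_injective
      exact extFinite_of_finite _
    · exact IsArtinianCofinite.extFinite (LocalCoh.isArtinianCofinite_of_supportDim_le M hM)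
    · have := h₃ i hi
      exact extFinite_of_finite _
  apply isCofinite_localCohomology
  obtain rfl | hi := eq_or_ne i 1
  · exact extFinite_localCoh_of_forall_ne h₃ (extFinite_of_finite M) 1 h
  · exact h i hi

theorem stmt7 {R : Type u} [CommRing R] [IsNoetherianRing R]
    (hdim : ringKrullDim R ≤ 2) (a : Ideal R) :
    ∀ (M : ModuleCat.{u} R), Module.Finite R M →
      ∀ i : ℕ, IsCofinite a ((localCohomology a i).obj M) :=
  fun M _ ↦ stmt7_general a M ((Module.supportDim_le_ringKrullDim R M).trans hdim)
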